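/- There exists a constant K > 0 such that for every integer n ≥ 3 and every prime p, there is a generating set Σ of SL_n(𝔽_p) with at most 3 elements such that every element of SL_n(𝔽_p) is a product of at most K·n²·ln p elements of Σ ∪ Σ⁻¹. -/

import Mathlib

open Matrix

/-- `IsWordMatrix S k A`: the matrix `A` is a product of at most `k` elements of `S ∪ S⁻¹`. -/
def IsWordMatrix {ι R : Type*} [DecidableEq ι] [Fintype ι] [CommRing R]
    (S : Set (SpecialLinearGroup ι R)) (k : ℕ) (A : Matrix ι ι R) : Prop :=
  ∃ l : List (SpecialLinearGroup ι R),
    l.length ≤ k ∧ (∀ x ∈ l, x ∈ S ∨ x⁻¹ ∈ S) ∧ (l.prod : Matrix ι ι R) = A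

/-- The elementary row matrix `1 + eᵢ rᵀ`. -/
def rowMatrix {ι R : Type*} [DecidableEq ι] [CommRing R] (i : ι) (r : ι → R) : Matrix ι ι R :=
  1 + vecMulVec (Pi.single i 1) r

/-- A matrix is monomial over the permutation `τ` if it sends the basis vector `k` to a nonzero
multiple of the basis vector `τ k`. -/
def IsMonomialOver {ι R : Type*} [DecidableEq ι] [CommRing R]
    (τ : Equiv.Perm ι) (A : Matrix ι ι R) : Prop :=
  ∀ k, ∃ c : R, c ≠ 0 ∧ ∀ l, A l k = if l = τ k then c else 0

theorem Matrix.SpecialLinearGroup.coe_mul_coe_inv {ι R : Type*} [DecidableEq ι] [Fintype ι]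
    [CommRing R] (g : SpecialLinearGroup ι R) :
    (g : Matrix ι ι R) * ((g⁻¹ : SpecialLinearGroup ι R) : Matrix ι ι R) = 1 :=
  congrArg Subtype.val (mul_inv_cancel g)

namespace IsWordMatrix

variable {ι R : Type*} [DecidableEq ι] [Fintype ι] [CommRing R]
  {S : Set (SpecialLinearGroup ι R)} {k k' : ℕ} {A B : Matrix ι ι R}

theorem mono (h : IsWordMatrix S k A) (hk : k ≤ k') : IsWordMatrix S k' A := by
  obtain ⟨l, h1, h2⟩ := h
  exact ⟨l, h1.trans hk, h2⟩

theorem one : IsWordMatrix S 0 (1 : Matrix ι ι R) := ⟨[], by simp⟩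

theorem of_mem {g : SpecialLinearGroup ι R} (hg : g ∈ S) :
    IsWordMatrix S 1 (g : Matrix ι ι R) :=
  ⟨[g], by simp [hg]⟩

theorem mul (hA : IsWordMatrix S k A) (hB : IsWordMatrix S k' B) :
    IsWordMatrix S (k + k') (A * B) := by
  obtain ⟨l, h1, h2, rfl⟩ := hA
  obtain ⟨l', h1', h2', rfl⟩ := hB
  refine ⟨l ++ l', by simp; lia, ?_, by simp⟩
  intro x hx
  rcases List.mem_append.1 hx with h | h
  exacts [h2 x h, h2' x h]

theorem inv {g : SpecialLinearGroup ι R} (hg : IsWordMatrix S k (g : Matrix ι ι R)) :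
    IsWordMatrix S k ((g⁻¹ : SpecialLinearGroup ι R) : Matrix ι ι R) := by
  obtain ⟨l, h1, h2, h3⟩ := hg
  obtain rfl : l.prod = g := Subtype.ext h3
  refine ⟨(l.map fun x => x⁻¹).reverse, by simpa, ?_, by rw [List.prod_inv_reverse]⟩
  intro x hx
  simp only [List.mem_reverse, List.mem_map] at hx
  obtain ⟨y, hy, rfl⟩ := hx
  simpa using (h2 y hy).symm

theorem conj {g : SpecialLinearGroup ι R} {c : ℕ} (hg : IsWordMatrix S c (g : Matrix ι ι R))
    (hA : IsWordMatrix S k A) (h : (g : Matrix ι ι R) * A = B * (g : Matrix ι ι R)) :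
    IsWordMatrix S (k + 2 * c) B := by
  have key : (g : Matrix ι ι R) * A * ((g⁻¹ : SpecialLinearGroup ι R) : Matrix ι ι R) = B := by
    rw [h, Matrix.mul_assoc, SpecialLinearGroup.coe_mul_coe_inv, Matrix.mul_one]
  rw [← key]
  exact ((hg.mul hA).mul hg.inv).mono (by lia)

theorem of_mul_eq {X : Matrix ι ι R} (hAX : IsWordMatrix S k (A * X)) (hX : IsWordMatrix S k' X) :
    IsWordMatrix S (k + k') A := by
  obtain ⟨l, h1, h2, rfl⟩ := hX
  have hX : IsWordMatrix S k' (l.prod : Matrix ι ι R) := ⟨l, h1, h2, rfl⟩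
  have := hAX.mul hX.inv
  rwa [Matrix.mul_assoc, SpecialLinearGroup.coe_mul_coe_inv, Matrix.mul_one] at this

end IsWordMatrix

section RowMatrix

variable {ι R : Type*} [DecidableEq ι] [CommRing R]

theorem rowMatrix_zero (i : ι) : rowMatrix i (0 : ι → R) = 1 := by simp [rowMatrix]

theorem rowMatrix_single (i j : ι) (x : R) :
    rowMatrix i (Pi.single j x) = transvection i j x := by
  rw [rowMatrix, transvection]
  congr 1
  ext a b
  simp only [vecMulVec_apply, Pi.single_apply, single_apply]
  grind

variable [Fintype ι]

theorem rowMatrix_add (i : ι) (r s : ι → R) (hr : r i = 0) :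
    rowMatrix i (r + s) = rowMatrix i r * rowMatrix i s := by
  simp [rowMatrix, mul_add, add_mul, vecMulVec_mul_vecMulVec, hr, vecMulVec_add, add_assoc]

theorem mul_rowMatrix_apply (M : Matrix ι ι R) (i : ι) (r : ι → R) (a b : ι) :
    (M * rowMatrix i r) a b = M a b + M a i * r b := by
  simp [rowMatrix, mul_add, mul_vecMulVec, vecMulVec_apply]

end RowMatrix

theorem IsMonomialOver.exists_mul_rowMatrix {ι R : Type*} [DecidableEq ι] [Fintype ι] [Field R]
    {τ : Equiv.Perm ι} {A : Matrix ι ι R} (hA : IsMonomialOver τ A) (i : ι) (s : ι → R) :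
    ∃ r : ι → R, (∀ k, s (τ k) = 0 → r k = 0) ∧
      A * rowMatrix i r = rowMatrix (τ i) s * A := by
  choose c hc0 hc using hA
  refine ⟨fun k => (c i)⁻¹ * (c k * s (τ k)), fun k hk => by simp [hk], ?_⟩
  ext a b
  rw [mul_rowMatrix_apply, rowMatrix, add_mul, vecMulVec_mul]
  have : (s ᵥ* A) b = s (τ b) * c b := by simp [vecMul, dotProduct, hc]
  have := hc0 i
  simp only [Matrix.one_mul, Matrix.add_apply, vecMulVec_apply, Pi.single_apply, *]
  by_cases h : a = τ i
  · simp [h]; field_simp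
  · simp [h]

section Weyl

variable {ι R : Type*} [DecidableEq ι] [Fintype ι] [Field R] {i j : ι}

/-- The Weyl element `e_i ↦ -a⁻¹ e_j`, `e_j ↦ a e_i` of the root subgroup `SL₂` at `i, j`. -/
def weylElement (hij : i ≠ j) (a : R) : SpecialLinearGroup ι R :=
  SpecialLinearGroup.transvection hij a * SpecialLinearGroup.transvection hij.symm (-a⁻¹) *
    SpecialLinearGroup.transvection hij a

theorem coe_weylElement_eq_mul (hij : i ≠ j) (a : R) : (weylElement hij a : Matrix ι ι R) =
    transvection i j a * transvection j i (-a⁻¹) * transvection i j a := rfl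

theorem coe_weylElement (hij : i ≠ j) {a : R} (ha : a ≠ 0) :
    (weylElement hij a : Matrix ι ι R) =
      1 + single i j a - single j i a⁻¹ - single i i 1 - single j j 1 := by
  rw [coe_weylElement_eq_mul]
  simp only [transvection, mul_add, add_mul, single_mul_single_same, one_mul, mul_one,
    single_mul_single_of_ne _ _ _ _ hij.symm]
  simp [ha, ← single_neg]
  abel

theorem isMonomialOver_weylElement (hij : i ≠ j) {a : R} (ha : a ≠ 0) :
    IsMonomialOver (Equiv.swap i j) (weylElement hij a : Matrix ι ι R) := by
  intro k
  refine ⟨if k = i then -a⁻¹ else if k = j then a else 1, ?_, fun l => ?_⟩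
  · split_ifs <;> simp [ha]
  · rw [coe_weylElement hij ha, Equiv.swap_apply_def]
    simp only [Matrix.sub_apply, Matrix.add_apply, single_apply, one_apply]
    grind

theorem weylElement_mul_transvection (hij : i ≠ j) {a : R} (ha : a ≠ 0) (x : R) :
    (weylElement hij a : Matrix ι ι R) * transvection i j x =
      transvection j i (-(x / a ^ 2)) * (weylElement hij a : Matrix ι ι R) := by
  rw [coe_weylElement hij ha]
  simp only [transvection, mul_add, add_mul, sub_mul, mul_sub, single_mul_single_same, one_mul,
    mul_one, single_mul_single_of_ne _ _ _ _ hij, single_mul_single_of_ne _ _ _ _ hij.symm]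
  have : x / a ^ 2 * a = a⁻¹ * x := by field_simp
  simp only [this, ← single_neg, neg_mul, add_zero, sub_zero]
  abel

theorem weylElement_mul_transvection_symm (hij : i ≠ j) {a : R} (ha : a ≠ 0) (x : R) :
    (weylElement hij a : Matrix ι ι R) * transvection j i x =
      transvection i j (-(a ^ 2 * x)) * (weylElement hij a : Matrix ι ι R) := by
  rw [coe_weylElement hij ha]
  simp only [transvection, mul_add, add_mul, sub_mul, mul_sub, single_mul_single_same, one_mul,
    mul_one, single_mul_single_of_ne _ _ _ _ hij, single_mul_single_of_ne _ _ _ _ hij.symm]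
  have : a ^ 2 * x * a⁻¹ = a * x := by field_simp
  simp only [this, ← single_neg, neg_mul, add_zero, sub_zero]
  abel

end Weyl

/-- The `n`-cycle `k ↦ k + 1` as a signed permutation matrix of determinant one. -/
def signedCycle (m : ℕ) (R : Type*) [CommRing R] : SpecialLinearGroup (Fin (m + 2)) R :=
  ⟨(diagonal (Pi.mulSingle 0 ((Equiv.Perm.sign (finRotate (m + 2)) : ℤ) : R))).submatrix
    (finRotate (m + 2)).symm id, by
    rw [det_permute, det_diagonal, Finset.prod_pi_mulSingle', Equiv.Perm.sign_symm]
    rw [if_pos (Finset.mem_univ _), ← Int.cast_mul, ← Units.val_mul, Int.units_mul_self, Units.val_one, Int.cast_one]⟩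

theorem isMonomialOver_signedCycle (m : ℕ) (R : Type*) [CommRing R] [Nontrivial R] :
    IsMonomialOver (finRotate (m + 2)) (signedCycle m R : Matrix _ _ R) := by
  intro k
  refine ⟨(Pi.mulSingle 0 ((Equiv.Perm.sign (finRotate (m + 2)) : ℤ) : R) : _ → R) k, ?_, ?_⟩
  · rw [Pi.mulSingle_apply]
    split_ifs
    · rcases Int.units_eq_one_or (Equiv.Perm.sign (finRotate (m + 2))) with h | h <;> simp [h]
    · exact one_ne_zero
  · intro l
    simp only [signedCycle, submatrix_apply, id, diagonal_apply, Equiv.symm_apply_eq]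
    split_ifs with h
    · simp [h]
    · rfl

theorem IsWordMatrix.det_eq_one {ι R : Type*} [DecidableEq ι] [Fintype ι] [CommRing R]
    {S : Set (SpecialLinearGroup ι R)} {k : ℕ} {A : Matrix ι ι R} (h : IsWordMatrix S k A) :
    A.det = 1 := by
  obtain ⟨l, -, -, rfl⟩ := h
  exact l.prod.det_coe

section RootWords

variable {ι R : Type*} [DecidableEq ι] [Fintype ι] [Field R] {i j : ι}
  {S : Set (SpecialLinearGroup ι R)}

theorem isWordMatrix_transvection_natCast (hij : i ≠ j)
    (hT : SpecialLinearGroup.transvection hij (1 : R) ∈ S) (k : ℕ) :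
    IsWordMatrix S k (transvection i j (k : R)) := by
  induction k with
  | zero => simpa using IsWordMatrix.one
  | succ k ih =>
    rw [Nat.cast_succ, ← transvection_mul_transvection_same _ _ hij]
    exact ih.mul (IsWordMatrix.of_mem hT)

theorem isWordMatrix_weylElement_one (hij : i ≠ j) (h2 : (2 : R) ≠ 0)
    (hT : SpecialLinearGroup.transvection hij (1 : R) ∈ S) (hv : weylElement hij 2 ∈ S) :
    IsWordMatrix S 8 (weylElement hij (1 : R) : Matrix ι ι R) := by
  have h4 := (IsWordMatrix.of_mem hv).conj (isWordMatrix_transvection_natCast hij hT 4)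
    (weylElement_mul_transvection hij h2 _)
  have h1 := IsWordMatrix.of_mem hT
  have e : -(((4 : ℕ) : R) / 2 ^ 2) = -1⁻¹ := by
    push_cast
    field_simp
    norm_num
  rw [e] at h4
  rw [coe_weylElement_eq_mul]
  exact (h1.mul h4).mul h1

theorem IsWordMatrix.transvection_four_mul (hij : i ≠ j) (h2 : (2 : R) ≠ 0)
    (hT : SpecialLinearGroup.transvection hij (1 : R) ∈ S) (hv : weylElement hij 2 ∈ S)
    {k : ℕ} {x : R} (hx : IsWordMatrix S k (transvection i j x)) :
    IsWordMatrix S (k + 18) (transvection i j (4 * x)) := by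
  have h := (isWordMatrix_weylElement_one hij h2 hT hv).conj hx
    (weylElement_mul_transvection hij one_ne_zero x)
  have h' := (IsWordMatrix.of_mem hv).conj h (weylElement_mul_transvection_symm hij h2 _)
  have e : -(2 ^ 2 * -(x / 1 ^ 2)) = 4 * x := by ring
  rwa [e] at h'

theorem isWordMatrix_transvection_of_lt_four_pow (hij : i ≠ j) (h2 : (2 : R) ≠ 0)
    (hT : SpecialLinearGroup.transvection hij (1 : R) ∈ S) (hv : weylElement hij 2 ∈ S)
    (k : ℕ) : ∀ q : ℕ, q < 4 ^ k → IsWordMatrix S (21 * k) (transvection i j (q : R)) := by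
  induction k with
  | zero =>
    intro q hq
    obtain rfl : q = 0 := by simpa using hq
    simpa using IsWordMatrix.one
  | succ k ih =>
    intro q hq
    have h := (ih (q / 4) (by rw [pow_succ] at hq; lia)).transvection_four_mul hij h2 hT hv
    have e : (q : R) = 4 * ((q / 4 : ℕ) : R) + ((q % 4 : ℕ) : R) := by
      conv_lhs => rw [← Nat.div_add_mod q 4]
      push_cast
      rfl
    rw [e, ← transvection_mul_transvection_same _ _ hij]
    exact (h.mul (isWordMatrix_transvection_natCast hij hT (q % 4))).mono (by lia)

end RootWords

section RowWords

variable {m c : ℕ} {R : Type*} [Field R] {S : Set (SpecialLinearGroup (Fin (m + 2)) R)} {a : R}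

theorem isWordMatrix_rowMatrix_zero (ha : a ≠ 0)
    (hv : weylElement (zero_ne_one : (0 : Fin (m + 2)) ≠ 1) a ∈ S)
    (hs : signedCycle m R ∈ S)
    (hT : ∀ x : R, IsWordMatrix S c (transvection (0 : Fin (m + 2)) 1 x)) (d : ℕ) :
    ∀ s : Fin (m + 2) → R, s 0 = 0 → (∀ k : Fin (m + 2), d < (k : ℕ) → s k = 0) →
      IsWordMatrix S (d * (c + 4)) (rowMatrix 0 s) := by
  induction d with
  | zero =>
    intro s h0 hs
    obtain rfl : s = 0 := by
      ext k
      rcases eq_or_ne k 0 with rfl | hk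
      · exact h0
      · exact hs k (Fin.pos_iff_ne_zero.2 hk)
    rw [rowMatrix_zero]
    exact IsWordMatrix.one.mono (by simp)
  | succ d ih =>
    intro s h0 hsd
    set s' : Fin (m + 2) → R := s - Pi.single 1 (s 1) with hs'
    have hs'0 : s' 0 = 0 := by simp [hs', h0]
    have hs'1 : s' 1 = 0 := by simp [hs']
    have hs'd (k : Fin (m + 2)) (hk : d + 1 < (k : ℕ)) : s' k = 0 := by
      have : k ≠ 1 := by rintro rfl; simp at hk
      simp [hs', hsd k hk, this]
    obtain ⟨r, hr, hvr⟩ := (isMonomialOver_weylElement zero_ne_one ha).exists_mul_rowMatrix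
      (1 : Fin (m + 2)) s'
    obtain ⟨q, hq, hsq⟩ := (isMonomialOver_signedCycle m R).exists_mul_rowMatrix
      (0 : Fin (m + 2)) r
    rw [Equiv.swap_apply_right] at hvr
    rw [finRotate_apply, zero_add] at hsq
    have hr0 : r 0 = 0 := hr 0 (by simpa using hs'1)
    have hr1 : r 1 = 0 := hr 1 (by simpa using hs'0)
    have hrd (k : Fin (m + 2)) (hk : d + 1 < (k : ℕ)) : r k = 0 := by
      refine hr k ?_
      rw [Equiv.swap_apply_of_ne_of_ne]
      · exact hs'd k hk
      · rintro rfl; simp at hk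
      · rintro rfl; simp at hk
    have hq0 : q 0 = 0 := hq 0 (by simpa using hr1)
    have hqd (k : Fin (m + 2)) (hk : d < (k : ℕ)) : q k = 0 := by
      refine hq k ?_
      rcases eq_or_ne k (Fin.last (m + 1)) with rfl | hne
      · simpa using hr0
      · refine hrd _ ?_
        rw [coe_finRotate_of_ne_last hne]
        lia
    have h := (IsWordMatrix.of_mem hv).conj ((IsWordMatrix.of_mem hs).conj (ih q hq0 hqd) hsq) hvr
    have e : s = Pi.single 1 (s 1) + s' := by simp [hs']
    rw [e, rowMatrix_add _ _ _ (by simp), rowMatrix_single]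
    exact ((hT _).mul h).mono (by lia)

theorem isWordMatrix_rowMatrix (ha : a ≠ 0)
    (hv : weylElement (zero_ne_one : (0 : Fin (m + 2)) ≠ 1) a ∈ S)
    (hs : signedCycle m R ∈ S)
    (hT : ∀ x : R, IsWordMatrix S c (transvection (0 : Fin (m + 2)) 1 x))
    (i : Fin (m + 2)) : ∀ s : Fin (m + 2) → R, s i = 0 →
      IsWordMatrix S ((m + 1) * (c + 4) + 2 * i) (rowMatrix i s) := by
  induction i using Fin.induction with
  | zero =>
    intro s h0
    exact (isWordMatrix_rowMatrix_zero ha hv hs hT (m + 1) s h0 (fun k hk => by lia)).mono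
      (by simp)
  | succ i ih =>
    intro s h0
    obtain ⟨q, hq, hsq⟩ := (isMonomialOver_signedCycle m R).exists_mul_rowMatrix i.castSucc s
    rw [finRotate_apply, Fin.coeSucc_eq_succ] at hsq
    have := (IsWordMatrix.of_mem hs).conj (ih q (hq _ (by simpa using h0))) hsq
    exact this.mono (by simp; lia)

end RowWords

section Elimination

variable {n c : ℕ} {R : Type*} [Field R] {S : Set (SpecialLinearGroup (Fin n) R)}

theorem exists_ne_zero_of_rows_eq_single {M : Matrix (Fin n) (Fin n) R} (hdet : M.det = 1)
    {j : Fin n} (hM : ∀ i < j, M i = Pi.single i 1) : ∃ k, j ≤ k ∧ M j k ≠ 0 := by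
  by_contra! h
  have hinv : M * M⁻¹ = 1 := M.mul_nonsing_inv (by simp [hdet])
  have h1 (k : Fin n) (hk : k < j) : M⁻¹ k j = 0 := by
    have := congrFun (congrFun hinv k) j
    rw [mul_apply, hM k hk, one_apply_ne hk.ne] at this
    simpa [Pi.single_apply] using this
  have h2 := congrFun (congrFun hinv j) j
  rw [mul_apply, one_apply_eq, Finset.sum_eq_zero] at h2
  · exact zero_ne_one h2
  · intro k _
    rcases lt_or_ge k j with hk | hk
    · rw [h1 k hk, mul_zero]
    · rw [h k hk, zero_mul]

theorem mul_rowMatrix_row {M : Matrix (Fin n) (Fin n) R} {i j : Fin n} (h : M j i = 0)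
    (r : Fin n → R) : (M * rowMatrix i r) j = M j := by
  ext b
  rw [mul_rowMatrix_apply, h, zero_mul, add_zero]

theorem isWordMatrix_of_rows_eq_single
    (hrow : ∀ (i : Fin n) (r : Fin n → R), r i = 0 → IsWordMatrix S c (rowMatrix i r)) (d : ℕ) :
    ∀ M : Matrix (Fin n) (Fin n) R, M.det = 1 →
      (∀ i : Fin n, (i : ℕ) + d < n → M i = Pi.single i 1) → IsWordMatrix S (3 * d * c) M := by
  have hdet_mul {M : Matrix (Fin n) (Fin n) R} (hM : M.det = 1) {i : Fin n} {r : Fin n → R}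
      (hr : r i = 0) : (M * rowMatrix i r).det = 1 := by
    rw [det_mul, hM, (hrow i r hr).det_eq_one, one_mul]
  induction d with
  | zero =>
    intro M _ hM
    have : M = 1 := by
      ext i k
      rw [hM i (by simp), one_apply, Pi.single_apply]
      simp [eq_comm]
    rw [this]
    exact IsWordMatrix.one.mono (by simp)
  | succ d ih =>
    intro M hdet hM
    rcases lt_or_ge d n with hd | hd
    swap
    · exact (ih M hdet fun i hi => by lia).mono (by gcongr; simp)
    obtain ⟨j, hj⟩ : ∃ j : Fin n, (j : ℕ) + (d + 1) = n := ⟨⟨n - (d + 1), by lia⟩, by simp; lia⟩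
    replace hM (i : Fin n) (hi : i < j) : M i = Pi.single i 1 := hM i (by lia)
    have zero_of_lt {M : Matrix (Fin n) (Fin n) R} (hM : ∀ i < j, M i = Pi.single i 1)
        {i k : Fin n} (hi : i < j) (hk : j ≤ k) : M i k = 0 := by
      rw [hM i hi, Pi.single_eq_of_ne (by lia)]
    have clear (M : Matrix (Fin n) (Fin n) R) (hdet : M.det = 1)
        (hM : ∀ i < j, M i = Pi.single i 1) (h1 : M j j = 1) :
        IsWordMatrix S (3 * d * c + c) M := by
      set r : Fin n → R := Pi.single j 1 - M j with hr
      have hrj : r j = 0 := by simp [hr, h1]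
      refine IsWordMatrix.of_mul_eq (ih (M * rowMatrix j r) (hdet_mul hdet hrj) fun i hi => ?_)
        (hrow j r hrj)
      rcases (show i ≤ j by lia).lt_or_eq with h | rfl
      · rw [mul_rowMatrix_row (zero_of_lt hM h le_rfl), hM i h]
      · ext b
        rw [mul_rowMatrix_apply, h1, hr]
        simp
    have pivot (M : Matrix (Fin n) (Fin n) R) (hdet : M.det = 1)
        (hM : ∀ i < j, M i = Pi.single i 1) (k : Fin n) (hk : j < k) (h0 : M j k ≠ 0) :
        IsWordMatrix S (3 * d * c + c + c) M := by
      set r : Fin n → R := Pi.single j ((1 - M j j) / M j k) with hr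
      have hrk : r k = 0 := by simp [hr, hk.ne']
      refine IsWordMatrix.of_mul_eq (clear (M * rowMatrix k r) (hdet_mul hdet hrk)
        (fun i hi => ?_) ?_) (hrow k r hrk)
      · rw [mul_rowMatrix_row (zero_of_lt hM hi hk.le), hM i hi]
      · rw [mul_rowMatrix_apply, hr, Pi.single_eq_same, mul_div_cancel₀ _ h0]
        ring
    have e : 3 * (d + 1) * c = 3 * d * c + c + c + c := by ring
    rw [e]
    by_cases hex : ∃ k, j < k ∧ M j k ≠ 0
    · obtain ⟨k, hk, h0⟩ := hex
      exact (pivot M hdet hM k hk h0).mono (by lia)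
    push Not at hex
    have hjj : M j j ≠ 0 := by
      obtain ⟨k, hk, h0⟩ := exists_ne_zero_of_rows_eq_single hdet hM
      rcases hk.eq_or_lt with rfl | hk
      · exact h0
      · exact absurd (hex k hk) h0
    rcases Nat.eq_zero_or_pos d with rfl | hd
    · refine (clear M hdet hM ?_).mono (by lia)
      have hlt : M.IsLowerTriangular := by
        intro i k (hik : i < k)
        rcases (show i ≤ j by lia).lt_or_eq with h | rfl
        · rw [hM i h, Pi.single_eq_of_ne hik.ne']
        · exact hex k hik
      rw [det_of_isLowerTriangular M hlt, Finset.prod_eq_single j] at hdet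
      · exact hdet
      · intro i _ hi
        rw [hM i (by lia), Pi.single_eq_same]
      · simp
    · obtain ⟨k, hk⟩ : ∃ k : Fin n, j < k := ⟨⟨j + 1, by lia⟩, by simp [Fin.lt_def]⟩
      have hr : (Pi.single k 1 : Fin n → R) j = 0 := Pi.single_eq_of_ne hk.ne _
      refine IsWordMatrix.of_mul_eq (pivot _ (hdet_mul hdet hr) (fun i hi => ?_) k hk ?_)
        (hrow j _ hr)
      · rw [mul_rowMatrix_row (zero_of_lt hM hi le_rfl), hM i hi]
      · rw [mul_rowMatrix_apply, hex k hk]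
        simpa using hjj

theorem isWordMatrix_of_det_eq_one
    (hrow : ∀ (i : Fin n) (r : Fin n → R), r i = 0 → IsWordMatrix S c (rowMatrix i r))
    {M : Matrix (Fin n) (Fin n) R} (hM : M.det = 1) : IsWordMatrix S (3 * n * c) M :=
  isWordMatrix_of_rows_eq_single hrow n M hM fun i hi => by lia

end Elimination

theorem exists_scale_isWordMatrix_transvection {ι : Type*} [DecidableEq ι] [Fintype ι]
    (p : ℕ) [Fact p.Prime] {i j : ι} (hij : i ≠ j) :
    ∃ a : ZMod p, a ≠ 0 ∧ ∀ S : Set (SpecialLinearGroup ι (ZMod p)),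
      SpecialLinearGroup.transvection hij 1 ∈ S → weylElement hij a ∈ S →
      ∀ x, IsWordMatrix S (21 * (Nat.log 2 p + 1)) (transvection i j x) := by
  have hval (x : ZMod p) : ((x.val : ℕ) : ZMod p) = x := ZMod.natCast_zmod_val x
  by_cases h2 : (2 : ZMod p) = 0
  · refine ⟨1, one_ne_zero, fun S hT _ x => ?_⟩
    have hp : p ≤ 2 := Nat.le_of_dvd two_pos ((ZMod.natCast_eq_zero_iff 2 p).1 (mod_cast h2))
    rw [← hval x]
    exact (isWordMatrix_transvection_natCast hij hT x.val).mono (by have := x.val_lt; lia)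
  · refine ⟨2, h2, fun S hT hv x => ?_⟩
    rw [← hval x]
    refine isWordMatrix_transvection_of_lt_four_pow hij h2 hT hv _ _ (x.val_lt.trans ?_)
    exact (Nat.lt_pow_succ_log_self one_lt_two p).trans_le (by gcongr; norm_num)

theorem natLog_two_add_one_le {p : ℕ} (hp : 2 ≤ p) : (Nat.log 2 p + 1 : ℝ) ≤ 3 * Real.log p := by
  have h1 := Real.natLog_le_logb p 2
  have h2 := Real.log_two_gt_d9
  have h3 : Real.log 2 ≤ Real.log p := Real.log_le_log (by norm_num) (mod_cast hp)
  rw [Real.logb, Nat.cast_ofNat, le_div_iff₀ (by linarith)] at h1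
  nlinarith

/-- There is a constant K > 0 such that for every n ≥ 3 and every prime p, SL_n(𝔽_p) has
a generating set Σ of at most 3 elements such that every element of SL_n(𝔽_p) is a
product of at most K·n²·ln p elements of Σ ∪ Σ⁻¹. -/
theorem exists_three_element_generating_set_SL_n_Fp :
    ∃ K : ℝ, 0 < K ∧ ∀ (n p : ℕ), 3 ≤ n → p.Prime →
      ∃ S : Finset (Matrix.SpecialLinearGroup (Fin n) (ZMod p)),
        S.card ≤ 3 ∧
        Subgroup.closure (S : Set (Matrix.SpecialLinearGroup (Fin n) (ZMod p))) = ⊤ ∧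
        ∀ M : Matrix.SpecialLinearGroup (Fin n) (ZMod p),
          ∃ l : List (Matrix.SpecialLinearGroup (Fin n) (ZMod p)),
            (l.length : ℝ) ≤ K * n ^ 2 * Real.log p ∧
            (∀ x ∈ l, x ∈ S ∨ x⁻¹ ∈ S) ∧
            l.prod = M := by
  refine ⟨243, by norm_num, fun n p hn hp => ?_⟩
  have : Fact p.Prime := ⟨hp⟩
  obtain ⟨m, rfl⟩ : ∃ m, n = m + 2 := ⟨n - 2, by lia⟩
  have h01 : (0 : Fin (m + 2)) ≠ 1 := zero_ne_one
  obtain ⟨a, ha, hword⟩ := exists_scale_isWordMatrix_transvection p h01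
  classical
  set S : Finset (SpecialLinearGroup (Fin (m + 2)) (ZMod p)) :=
    {SpecialLinearGroup.transvection h01 1, weylElement h01 a, signedCycle m (ZMod p)} with hS
  set k := Nat.log 2 p + 1 with hk
  have hT := hword S (by simp [hS]) (by simp [hS])
  have hrow (i : Fin (m + 2)) (r : Fin (m + 2) → ZMod p) (hr : r i = 0) :
      IsWordMatrix (S : Set (SpecialLinearGroup (Fin (m + 2)) (ZMod p)))
        (27 * (m + 2) * k) (rowMatrix i r) := by
    refine (isWordMatrix_rowMatrix ha (by simp [hS]) (by simp [hS]) hT i r hr).mono ?_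
    have : (i : ℕ) < m + 2 := i.2
    nlinarith
  have main (M : SpecialLinearGroup (Fin (m + 2)) (ZMod p)) :
      ∃ l : List (SpecialLinearGroup (Fin (m + 2)) (ZMod p)),
        l.length ≤ 3 * (m + 2) * (27 * (m + 2) * k) ∧ (∀ x ∈ l, x ∈ S ∨ x⁻¹ ∈ S) ∧
        l.prod = M := by
    obtain ⟨l, h1, h2, h3⟩ := isWordMatrix_of_det_eq_one hrow M.det_coe
    exact ⟨l, h1, h2, Subtype.ext h3⟩
  refine ⟨S, Finset.card_le_three, ?_, fun M => ?_⟩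
  · refine (Subgroup.eq_top_iff' _).2 fun M => ?_
    obtain ⟨l, -, hl, rfl⟩ := main M
    refine Subgroup.list_prod_mem _ fun x hx => ?_
    rcases hl x hx with h | h
    · exact Subgroup.subset_closure h
    · exact (Subgroup.inv_mem_iff _).1 (Subgroup.subset_closure h)
  · obtain ⟨l, hlen, hl, hprod⟩ := main M
    refine ⟨l, ?_, hl, hprod⟩
    have hlog := natLog_two_add_one_le hp.two_le
    calc (l.length : ℝ) ≤ ((3 * (m + 2) * (27 * (m + 2) * k) : ℕ) : ℝ) := mod_cast hlen
      _ = 81 * ((m + 2 : ℕ) : ℝ) ^ 2 * (Nat.log 2 p + 1) := by rw [hk]; push_cast; ring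
      _ ≤ 81 * ((m + 2 : ℕ) : ℝ) ^ 2 * (3 * Real.log p) := by gcongr
      _ = 243 * ((m + 2 : ℕ) : ℝ) ^ 2 * Real.log p := by ring
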